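/- arXiv:0705.3261 — 6 statements merged into one kernel-verified Lean document; each statement's English description precedes it below -/
import Mathlib

section
/- For every real ρ ≥ 0, the minimum of the two quantities Σ_{k=1}^{L} log₂(1 + ρ(|a|² + |b_k|²)) and log₂ det(I_{L+1} + ρ H Hᴴ) equals log₂ det(I_{L+1} + ρ H Hᴴ); i.e. the sum-rate constraint never binds below the MIMO determinant term, so the achievable rate of the successive relaying scheme equals (1/(L+1)) log₂ det(I_{L+1} + ρ H Hᴴ). -/
open Matrix Filter

/-!
By the Weinstein–Aronszajn identity `det (1 + ρ H Hᴴ) = det (1 + ρ Hᴴ H)`, and the `k`-th diagonal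
entry of the positive definite matrix `1 + ρ Hᴴ H` is one plus `ρ` times the squared norm of the
`k`-th column of `H`. So the claim is Hadamard's inequality `det M ≤ ∏ i, M i i`. To prove the
latter, rescale `M` to have unit diagonal: its trace is then the dimension, and the bound
`x ≤ exp (x - 1)` applied to each eigenvalue shows that its determinant is at most `1`.
-/

section Hadamard

open scoped ComplexOrder

variable {n 𝕜 : Type*} [Fintype n] [DecidableEq n] [RCLike 𝕜] {M : Matrix n n 𝕜}

theorem det_le_exp_re_trace_sub_card_of_posSemidef (hM : M.PosSemidef) :
    M.det ≤ (Real.exp (RCLike.re M.trace - Fintype.card n) : 𝕜) := by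
  have trace_eq : RCLike.re M.trace = ∑ i, hM.1.eigenvalues i := by
    rw [hM.1.trace_eq_sum_eigenvalues, ← RCLike.ofReal_sum, RCLike.ofReal_re]
  rw [hM.1.det_eq_prod_eigenvalues, ← RCLike.ofReal_prod, RCLike.ofReal_le_ofReal]
  calc
    ∏ i, hM.1.eigenvalues i ≤ ∏ i, Real.exp (hM.1.eigenvalues i - 1) :=
      Finset.prod_le_prod (fun i _ ↦ hM.eigenvalues_nonneg i)
        (fun i _ ↦ by linarith [Real.add_one_le_exp (hM.1.eigenvalues i - 1)])
    _ = Real.exp (RCLike.re M.trace - Fintype.card n) := by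
      rw [← Real.exp_sum, Finset.sum_sub_distrib, trace_eq]
      simp

theorem det_le_one_of_posSemidef_of_diag_eq_one (hM : M.PosSemidef) (hdiag : ∀ i, M i i = 1) :
    M.det ≤ 1 := by
  simpa [trace, hdiag] using det_le_exp_re_trace_sub_card_of_posSemidef hM

theorem det_le_prod_diag_of_posDef (hM : M.PosDef) : M.det ≤ ∏ i, M i i := by
  let c : n → ℝ := fun i ↦ (√(RCLike.re (M i i)))⁻¹
  let D : Matrix n n 𝕜 := diagonal fun i ↦ (c i : 𝕜)
  have scaled_diag (i : n) : (c i : 𝕜) * M i i * c i = 1 := by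
    have hpos : 0 < RCLike.re (M i i) := (RCLike.pos_iff.1 hM.diag_pos).1
    have hsq : c i * RCLike.re (M i i) * c i = 1 := by
      simp only [c]
      field_simp
      exact (Real.sq_sqrt hpos.le).symm
    rw [← hM.1.coe_re_apply_self i]
    exact_mod_cast hsq
  have hD : Dᴴ = D := by simp [D, diagonal_conjTranspose, Pi.star_def]
  have scaled_posSemidef : (D * M * D).PosSemidef := by
    simpa only [hD] using hM.posSemidef.conjTranspose_mul_mul_same D
  have scaled_det_le_one : (D * M * D).det ≤ 1 :=
    det_le_one_of_posSemidef_of_diag_eq_one scaled_posSemidef fun i ↦ by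
      rw [mul_diagonal, diagonal_mul, scaled_diag]
  calc
    M.det = (∏ i, (c i : 𝕜) * M i i * c i) * M.det := by simp [scaled_diag]
    _ = (∏ i, M i i) * (D * M * D).det := by
      simp only [D, det_mul, det_diagonal, Finset.prod_mul_distrib]
      ring
    _ ≤ ∏ i, M i i :=
      mul_le_of_le_one_right (Finset.prod_nonneg fun _ _ ↦ hM.diag_pos.le) scaled_det_le_one

theorem det_le_prod_diag_of_posSemidef (hM : M.PosSemidef) : M.det ≤ ∏ i, M i i := by
  by_cases hdet : M.det = 0
  · exact hdet.trans_le (Finset.prod_nonneg fun _ _ ↦ hM.diag_nonneg)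
  · exact det_le_prod_diag_of_posDef
      (hM.posDef_iff_isUnit.2 ((isUnit_iff_isUnit_det M).2 (isUnit_iff_ne_zero.2 hdet)))

end Hadamard

section ColumnNorms

open scoped ComplexOrder

variable {m n 𝕜 : Type*} [Fintype m] [RCLike 𝕜] (H : Matrix m n 𝕜) {ρ : ℝ}

theorem one_add_smul_conjTranspose_mul_self_apply_self [DecidableEq n] (k : n) :
    (1 + (ρ : 𝕜) • (Hᴴ * H) : Matrix n n 𝕜) k k = ((1 + ρ * ∑ i, ‖H i k‖ ^ 2 : ℝ) : 𝕜) := by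
  simp [mul_apply, RCLike.conj_mul, Algebra.smul_def]

variable [DecidableEq m] [Fintype n]

theorem re_det_one_add_smul_mul_conjTranspose_pos (hρ : 0 ≤ ρ) :
    0 < RCLike.re (1 + (ρ : 𝕜) • (H * Hᴴ)).det := by
  have hpd : (1 + (ρ : 𝕜) • (H * Hᴴ)).PosDef :=
    PosDef.one.add_posSemidef
      ((posSemidef_self_mul_conjTranspose H).smul (RCLike.ofReal_nonneg.2 hρ))
  exact (RCLike.pos_iff.1 hpd.det_pos).1

theorem re_det_one_add_smul_mul_conjTranspose_le_prod (hρ : 0 ≤ ρ) :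
    RCLike.re (1 + (ρ : 𝕜) • (H * Hᴴ)).det ≤ ∏ k, (1 + ρ * ∑ i, ‖H i k‖ ^ 2) := by
  classical
  have hpsd : (1 + (ρ : 𝕜) • (Hᴴ * H)).PosSemidef :=
    PosSemidef.one.add
      ((posSemidef_conjTranspose_mul_self H).smul (RCLike.ofReal_nonneg.2 hρ))
  have det_comm : (1 + (ρ : 𝕜) • (H * Hᴴ)).det = (1 + (ρ : 𝕜) • (Hᴴ * H)).det := by
    rw [← Matrix.smul_mul, det_one_add_mul_comm, Matrix.mul_smul]
  have hadamard := (RCLike.le_iff_re_im.1 (det_le_prod_diag_of_posSemidef hpsd)).1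
  simp only [one_add_smul_conjTranspose_mul_self_apply_self] at hadamard
  rwa [← RCLike.ofReal_prod, RCLike.ofReal_re, ← det_comm] at hadamard

theorem stmt0_general {c : ℝ} (hc : 1 < c) (hρ : 0 ≤ ρ) :
    min (∑ k, Real.logb c (1 + ρ * ∑ i, ‖H i k‖ ^ 2))
        (Real.logb c (RCLike.re (1 + (ρ : 𝕜) • (H * Hᴴ)).det))
      = Real.logb c (RCLike.re (1 + (ρ : 𝕜) • (H * Hᴴ)).det) := by
  have factor_ne_zero (k : n) : 1 + ρ * ∑ i, ‖H i k‖ ^ 2 ≠ 0 := by positivity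
  rw [← Real.logb_prod _ _ fun k _ ↦ factor_ne_zero k]
  exact min_eq_right <| Real.logb_le_logb_of_le hc
    (re_det_one_add_smul_mul_conjTranspose_pos H hρ)
    (re_det_one_add_smul_mul_conjTranspose_le_prod H hρ)

end ColumnNorms

theorem sum_norm_sq_col_of_lower_bidiagonal {E : Type*} [SeminormedAddGroup E] {L : ℕ}
    {a b : Fin L → E} {H : Matrix (Fin (L + 1)) (Fin L) E}
    (hH : ∀ i j, H i j =
      if (i : ℕ) = (j : ℕ) then a j else if (i : ℕ) = (j : ℕ) + 1 then b j else 0)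
    (k : Fin L) : ∑ i, ‖H i k‖ ^ 2 = ‖a k‖ ^ 2 + ‖b k‖ ^ 2 := by
  rw [Fintype.sum_eq_add k.castSucc k.succ Fin.castSucc_lt_succ.ne]
  · simp [hH]
  · rintro i ⟨hdiag, hsubdiag⟩
    simp only [ne_eq, Fin.ext_iff, Fin.val_castSucc, Fin.val_succ] at hdiag hsubdiag
    simp [hH, hdiag, hsubdiag]

/-- For the successive-relaying channel matrix `H` (with `a` on the
diagonal and `b k` on the subdiagonal), for every `ρ ≥ 0` the minimum of the
sum-rate term `∑ k, log₂(1 + ρ(|a|² + |b k|²))` and the MIMO determinant term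
`log₂ det(I + ρ H Hᴴ)` equals the determinant term; hence the achievable rate
equals `(1/(L+1)) log₂ det(I + ρ H Hᴴ)`. -/
theorem stmt0 (L : ℕ) (hL : 1 ≤ L) (a : ℂ) (b : Fin L → ℂ)
    (H : Matrix (Fin (L + 1)) (Fin L) ℂ)
    (hH : ∀ i j, H i j =
      if (i : ℕ) = (j : ℕ) then a else if (i : ℕ) = (j : ℕ) + 1 then b j else 0)
    (ρ : ℝ) (hρ : 0 ≤ ρ) :
    min (∑ k : Fin L, Real.logb 2 (1 + ρ * (‖a‖ ^ 2 + ‖b k‖ ^ 2)))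
        (Real.logb 2 ((1 + (ρ : ℂ) • (H * H.conjTranspose)).det).re)
      = Real.logb 2 ((1 + (ρ : ℂ) • (H * H.conjTranspose)).det).re ∧
    (1 / (L + 1 : ℝ)) *
      min (∑ k : Fin L, Real.logb 2 (1 + ρ * (‖a‖ ^ 2 + ‖b k‖ ^ 2)))
        (Real.logb 2 ((1 + (ρ : ℂ) • (H * H.conjTranspose)).det).re)
      = (1 / (L + 1 : ℝ)) *
          Real.logb 2 ((1 + (ρ : ℂ) • (H * H.conjTranspose)).det).re := by
  have hmin := stmt0_general H one_lt_two hρ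
  simp only [sum_norm_sq_col_of_lower_bidiagonal hH] at hmin
  exact ⟨hmin, congrArg _ hmin⟩
end

section
/- For any vectors h₁, …, h_L in ℂᴺ and any real ρ ≥ 0, log₂ det(I_N + ρ Σ_{k=1}^{L} h_k h_kᴴ) ≤ Σ_{k=1}^{L} log₂(1 + ρ‖h_k‖²); equivalently, the sum of the single-stream capacities dominates the joint MIMO capacity term. -/
open Matrix Filter

/-!
Adding the streams one at a time, it suffices to see that passing from `A ≥ I` to `A + c v vᴴ`
multiplies the determinant by at most `1 + c ‖v‖²`. By the matrix determinant lemma the factor is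
exactly `1 + c vᴴ A⁻¹ v`, and `A⁻¹ ≤ I`.
-/

theorem det_add_vecMulVec {n R : Type*} [Fintype n] [DecidableEq n] [CommRing R]
    {A : Matrix n n R} (hA : IsUnit A.det) (u v : n → R) :
    (A + vecMulVec u v).det = A.det * (1 + v ⬝ᵥ A⁻¹ *ᵥ u) := by
  have hfactor : A + vecMulVec u v = A * (1 + vecMulVec (A⁻¹ *ᵥ u) v) := by
    rw [mul_add, mul_one, mul_vecMulVec, mulVec_mulVec, mul_nonsing_inv _ hA, one_mulVec]
  rw [hfactor, det_mul, vecMulVec_eq Unit, det_one_add_replicateCol_mul_replicateRow]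

theorem star_dotProduct_self_eq_sum_norm_sq {n 𝕜 : Type*} [Fintype n] [RCLike 𝕜] (v : n → 𝕜) :
    star v ⬝ᵥ v = ((∑ i, ‖v i‖ ^ 2 : ℝ) : 𝕜) := by
  simp [dotProduct, RCLike.conj_mul]

section RCLike

open scoped ComplexOrder MatrixOrder

variable {ι n 𝕜 : Type*} [RCLike 𝕜] [DecidableEq n] {A : Matrix n n 𝕜}

theorem posDef_of_one_le (hA : 1 ≤ A) : A.PosDef := by
  simpa only [add_sub_cancel] using PosDef.one.add_posSemidef (le_iff.mp hA)

theorem one_le_one_add_sum_smul_vecMulVec_star [Finite n] {s : Finset ι} {c : ι → 𝕜}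
    (hc : ∀ k ∈ s, 0 ≤ c k) (v : ι → n → 𝕜) :
    1 ≤ 1 + ∑ k ∈ s, c k • vecMulVec (v k) (star (v k)) :=
  le_add_of_nonneg_right <| Finset.sum_nonneg fun k hk =>
    ((posSemidef_vecMulVec_self_star (v k)).smul (hc k hk)).nonneg

variable [Fintype n]

theorem star_dotProduct_inv_mulVec_le (hA : 1 ≤ A) (v : n → 𝕜) :
    star v ⬝ᵥ A⁻¹ *ᵥ v ≤ star v ⬝ᵥ v := by
  have hB : (A - 1).PosSemidef := le_iff.mp hA
  set B := A - 1
  set x := A⁻¹ *ᵥ v with hx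
  have hv : v = x + B *ᵥ x := by
    rw [sub_mulVec, one_mulVec, add_sub_cancel, hx, mulVec_mulVec,
      mul_nonsing_inv _ (posDef_of_one_le hA).det_pos.ne'.isUnit, one_mulVec]
  calc star v ⬝ᵥ x
      ≤ star v ⬝ᵥ x + (star x ⬝ᵥ B *ᵥ x + star (B *ᵥ x) ⬝ᵥ B *ᵥ x) :=
        le_add_of_nonneg_right
          (add_nonneg (hB.dotProduct_mulVec_nonneg x) (dotProduct_star_self_nonneg _))
    _ = star v ⬝ᵥ x + star v ⬝ᵥ B *ᵥ x := by rw [← add_dotProduct, ← star_add, ← hv]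
    _ = star v ⬝ᵥ v := by rw [← dotProduct_add, ← hv]

theorem det_add_smul_vecMulVec_star_le (hA : 1 ≤ A) {c : 𝕜} (hc : 0 ≤ c) (v : n → 𝕜) :
    (A + c • vecMulVec v (star v)).det ≤ A.det * (1 + c * (star v ⬝ᵥ v)) := by
  have hdet : 0 < A.det := (posDef_of_one_le hA).det_pos
  calc (A + c • vecMulVec v (star v)).det
      = A.det * (1 + c * (star v ⬝ᵥ A⁻¹ *ᵥ v)) := by
        rw [← smul_vecMulVec, det_add_vecMulVec hdet.ne'.isUnit, mulVec_smul, dotProduct_smul,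
          smul_eq_mul]
    _ ≤ A.det * (1 + c * (star v ⬝ᵥ v)) := by
        gcongr
        exact star_dotProduct_inv_mulVec_le hA v

theorem det_one_add_sum_smul_vecMulVec_star_le_prod {s : Finset ι} {c : ι → 𝕜}
    (hc : ∀ k ∈ s, 0 ≤ c k) (v : ι → n → 𝕜) :
    (1 + ∑ k ∈ s, c k • vecMulVec (v k) (star (v k))).det
      ≤ ∏ k ∈ s, (1 + c k * (star (v k) ⬝ᵥ v k)) := by
  induction s using Finset.cons_induction with
  | empty => simp
  | cons a s ha ih =>
    obtain ⟨hca, hcs⟩ := Finset.forall_mem_cons ha _ |>.mp hc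
    have hfactor : 0 ≤ 1 + c a * (star (v a) ⬝ᵥ v a) :=
      add_nonneg zero_le_one (mul_nonneg hca (dotProduct_star_self_nonneg _))
    rw [Finset.sum_cons, Finset.prod_cons, add_comm (c a • _), ← add_assoc, mul_comm]
    exact (det_add_smul_vecMulVec_star_le (one_le_one_add_sum_smul_vecMulVec_star hcs v) hca
      (v a)).trans (mul_le_mul_of_nonneg_right (ih hcs) hfactor)

theorem stmt1_general {b : ℝ} (hb : 1 < b) {s : Finset ι} {ρ : ι → ℝ}
    (hρ : ∀ k ∈ s, 0 ≤ ρ k) (h : ι → n → 𝕜) :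
    Real.logb b (RCLike.re (1 + ∑ k ∈ s, (ρ k : 𝕜) • vecMulVec (h k) (star (h k))).det)
      ≤ ∑ k ∈ s, Real.logb b (1 + ρ k * ∑ i, ‖h k i‖ ^ 2) := by
  have hc : ∀ k ∈ s, (0 : 𝕜) ≤ ρ k := fun k hk => RCLike.ofReal_nonneg.mpr (hρ k hk)
  have hdet_pos := (posDef_of_one_le (one_le_one_add_sum_smul_vecMulVec_star hc h)).det_pos
  have hdet_le := det_one_add_sum_smul_vecMulVec_star_le_prod hc h
  have hprod : ∏ k ∈ s, (1 + (ρ k : 𝕜) * (star (h k) ⬝ᵥ h k))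
      = ((∏ k ∈ s, (1 + ρ k * ∑ i, ‖h k i‖ ^ 2) : ℝ) : 𝕜) := by
    simp only [star_dotProduct_self_eq_sum_norm_sq]
    push_cast
    rfl
  have hfactor : ∀ k ∈ s, 1 + ρ k * ∑ i, ‖h k i‖ ^ 2 ≠ 0 := fun k hk => by
    have := hρ k hk
    positivity
  rw [← Real.logb_prod _ _ hfactor]
  refine Real.logb_le_logb_of_le hb (RCLike.pos_iff.mp hdet_pos).1 ?_
  simpa only [hprod, RCLike.ofReal_re] using RCLike.re_monotone hdet_le

end RCLike

/-- For any vectors `h₁, …, h_L` in `ℂᴺ` and any `ρ ≥ 0`,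
`log₂ det(I_N + ρ ∑ₖ hₖ hₖᴴ) ≤ ∑ₖ log₂(1 + ρ ‖hₖ‖²)`. -/
theorem stmt1 (N L : ℕ) (h : Fin L → Fin N → ℂ) (ρ : ℝ) (hρ : 0 ≤ ρ) :
    Real.logb 2 ((1 + (ρ : ℂ) • ∑ k : Fin L,
        Matrix.vecMulVec (h k) (star (h k))).det).re
      ≤ ∑ k : Fin L, Real.logb 2 (1 + ρ * ∑ i : Fin N, ‖h k i‖ ^ 2) := by
  rw [Finset.smul_sum]
  exact stmt1_general one_lt_two (fun _ _ => hρ) h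
end

section
/- For every real ρ ≥ 0, det(I_{m+1} + ρ H Hᴴ) ≥ (ρ|a|²)^m + Π_{j=1}^{m} (1 + ρ|b_j|²). In particular det(I_{m+1} + ρ H Hᴴ) ≥ max{(ρ|a|²)^m, Π_{j=1}^{m}(1 + ρ|b_j|²)}. -/
open Matrix Filter

/-!
Since `det (1 + ρ H Hᴴ) = det (1 + ρ Hᴴ H)`, it suffices to treat a tridiagonal matrix, whose
leading principal minors `D n` satisfy a three-term recurrence. With `α k = ρ |a k|²` and
`β k = ρ |b k|²`, indexed from `0`, it reads
`D (n + 2) = (1 + α (n + 1) + β (n + 1)) D (n + 1) - β n α (n + 1) D n`, and in terms of the excess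
`G n = D (n + 1) - (1 + β n) D n` it becomes free of subtraction: `G 0 = α 0` and
`G (n + 1) = α (n + 1) (G n + D n)`. Hence `G n ≥ α 0 ⋯ α n` and `D n ≥ ∏_{k < n} (1 + β k)`, so
`D (n + 1) = (1 + β n) D n + G n` is at least the sum of the two products.
-/

section Tridiagonal

variable {R : Type*}

/-- The `n × n` tridiagonal matrix with diagonal `d`, superdiagonal `e` and subdiagonal `f`. The
entries are taken from infinite sequences so that the leading principal submatrices of a tridiagonal
matrix are given by the same sequences. -/
def tridiagonal [Zero R] (d e f : ℕ → R) (n : ℕ) : Matrix (Fin n) (Fin n) R :=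
  of fun i j =>
    if (i : ℕ) = j then d i else if (j : ℕ) = i + 1 then e i else if (i : ℕ) = j + 1 then f j else 0

theorem tridiagonal_apply_diag [Zero R] (d e f : ℕ → R) {n : ℕ} {i j : Fin n}
    (h : (i : ℕ) = j) : tridiagonal d e f n i j = d i := by
  simp [tridiagonal, h]

theorem tridiagonal_apply_superdiag [Zero R] (d e f : ℕ → R) {n : ℕ} {i j : Fin n}
    (h : (j : ℕ) = i + 1) : tridiagonal d e f n i j = e i := by
  simp [tridiagonal, h]

theorem tridiagonal_apply_subdiag [Zero R] (d e f : ℕ → R) {n : ℕ} {i j : Fin n}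
    (h : (i : ℕ) = j + 1) : tridiagonal d e f n i j = f j := by
  simp [tridiagonal, h, add_assoc]

theorem tridiagonal_apply_eq_zero [Zero R] (d e f : ℕ → R) {n : ℕ} {i j : Fin n}
    (h : (i : ℕ) + 1 < j ∨ (j : ℕ) + 1 < i) : tridiagonal d e f n i j = 0 := by
  simp only [tridiagonal, of_apply]
  grind

theorem tridiagonal_submatrix_castSucc [Zero R] (d e f : ℕ → R) (n : ℕ) :
    (tridiagonal d e f (n + 1)).submatrix Fin.castSucc Fin.castSucc = tridiagonal d e f n := rfl

theorem one_add_smul_tridiagonal [Semiring R] (r : R) (d e f : ℕ → R) (n : ℕ) :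
    1 + r • tridiagonal d e f n =
      tridiagonal (fun k => 1 + r * d k) (fun k => r * e k) (fun k => r * f k) n := by
  ext i j
  by_cases hij : i = j
  · simp [tridiagonal, hij]
  · simp [tridiagonal, one_apply_ne hij, Fin.val_ne_of_ne hij]

variable [CommRing R]

theorem det_tridiagonal_submatrix_castSucc_succAbove (d e f : ℕ → R) (n : ℕ) :
    ((tridiagonal d e f (n + 2)).submatrix Fin.castSucc (Fin.last n).castSucc.succAbove).det =
      e n * (tridiagonal d e f n).det := by
  set M := (tridiagonal d e f (n + 2)).submatrix Fin.castSucc (Fin.last n).castSucc.succAbove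
  have hlast : M (Fin.last n) (Fin.last n) = e n :=
    tridiagonal_apply_superdiag d e f (by simp)
  have hzero (i : Fin n) : M i.castSucc (Fin.last n) = 0 :=
    tridiagonal_apply_eq_zero d e f (by simp)
  have hminor : M.submatrix Fin.castSucc Fin.castSucc = tridiagonal d e f n := by
    ext i j
    simp [M, tridiagonal, Fin.succAbove, Fin.lt_def]
  rw [det_succ_column M (Fin.last n), Fin.sum_univ_castSucc]
  simp [hlast, hzero, hminor]

theorem det_tridiagonal_add_two (d e f : ℕ → R) (n : ℕ) :
    (tridiagonal d e f (n + 2)).det =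
      d (n + 1) * (tridiagonal d e f (n + 1)).det - e n * f n * (tridiagonal d e f n).det := by
  set M := tridiagonal d e f (n + 2)
  have hdiag : M (Fin.last (n + 1)) (Fin.last (n + 1)) = d (n + 1) :=
    tridiagonal_apply_diag d e f rfl
  have hsub : M (Fin.last (n + 1)) (Fin.last n).castSucc = f n :=
    tridiagonal_apply_subdiag d e f rfl
  have hzero (j : Fin n) : M (Fin.last (n + 1)) j.castSucc.castSucc = 0 :=
    tridiagonal_apply_eq_zero d e f (by simp)
  rw [det_succ_row M (Fin.last (n + 1)), Fin.sum_univ_castSucc, Fin.sum_univ_castSucc,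
    Fin.succAbove_last, det_tridiagonal_submatrix_castSucc_succAbove,
    tridiagonal_submatrix_castSucc]
  simp only [hdiag, hsub, hzero, mul_zero, zero_mul, Finset.sum_const_zero, Fin.val_last,
    Fin.val_castSucc, (Even.add_self (n + 1)).neg_one_pow,
    (show Odd (n + 1 + n) by grind).neg_one_pow]
  ring

theorem det_tridiagonal_congr (d : ℕ → R) {e f e' f' : ℕ → R}
    (h : ∀ k, e k * f k = e' k * f' k) (n : ℕ) :
    (tridiagonal d e f n).det = (tridiagonal d e' f' n).det := by
  induction n using Nat.twoStepInduction with
  | zero => simp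
  | one => simp [tridiagonal]
  | more n ih ih' => rw [det_tridiagonal_add_two, det_tridiagonal_add_two, ih, ih', h]

theorem map_det_tridiagonal {S : Type*} [CommRing S] (φ : R →+* S) (d e f : ℕ → R) (n : ℕ) :
    φ (tridiagonal d e f n).det =
      (tridiagonal (fun k => φ (d k)) (fun k => φ (e k)) (fun k => φ (f k)) n).det := by
  rw [RingHom.map_det]
  congr 1
  ext i j
  simp [tridiagonal, apply_ite φ]

end Tridiagonal

section LowerBound

variable {R : Type*} [CommRing R] [PartialOrder R] [IsOrderedRing R] {α β : ℕ → R}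

theorem prod_le_and_prod_le_sub_of_recurrence (hα : ∀ k, 0 ≤ α k) (hβ : ∀ k, 0 ≤ β k)
    {D : ℕ → R} (hD_zero : D 0 = 1) (hD_one : D 1 = 1 + α 0 + β 0)
    (hD_rec : ∀ n, D (n + 2) = (1 + α (n + 1) + β (n + 1)) * D (n + 1) - β n * α (n + 1) * D n)
    (n : ℕ) :
    ∏ k ∈ Finset.range n, (1 + β k) ≤ D n ∧
      ∏ k ∈ Finset.range (n + 1), α k ≤ D (n + 1) - (1 + β n) * D n := by
  have hβ' (k : ℕ) : 0 ≤ 1 + β k := add_nonneg zero_le_one (hβ k)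
  induction n with
  | zero =>
    have hG_zero : D 1 - (1 + β 0) * D 0 = α 0 := by rw [hD_zero, hD_one]; ring
    exact ⟨by simp [hD_zero], by simp [hG_zero]⟩
  | succ n ih =>
    obtain ⟨hD, hG⟩ := ih
    have hD_nonneg : 0 ≤ D n := (Finset.prod_nonneg fun k _ => hβ' k).trans hD
    have hG_nonneg : 0 ≤ D (n + 1) - (1 + β n) * D n :=
      (Finset.prod_nonneg fun k _ => hα k).trans hG
    constructor
    · calc ∏ k ∈ Finset.range (n + 1), (1 + β k)
          = (1 + β n) * ∏ k ∈ Finset.range n, (1 + β k) := Finset.prod_range_succ_comm _ _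
        _ ≤ (1 + β n) * D n := mul_le_mul_of_nonneg_left hD (hβ' n)
        _ ≤ D (n + 1) := sub_nonneg.mp hG_nonneg
    · calc ∏ k ∈ Finset.range (n + 2), α k
          = α (n + 1) * ∏ k ∈ Finset.range (n + 1), α k := Finset.prod_range_succ_comm _ _
        _ ≤ α (n + 1) * (D (n + 1) - (1 + β n) * D n + D n) :=
            mul_le_mul_of_nonneg_left (le_add_of_le_of_nonneg hG hD_nonneg) (hα (n + 1))
        _ = D (n + 2) - (1 + β (n + 1)) * D (n + 1) := by rw [hD_rec]; ring

theorem prod_add_prod_one_add_le_det_tridiagonal (hα : ∀ k, 0 ≤ α k) (hβ : ∀ k, 0 ≤ β k)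
    {n : ℕ} (hn : n ≠ 0) :
    ∏ k ∈ Finset.range n, α k + ∏ k ∈ Finset.range n, (1 + β k) ≤
      (tridiagonal (fun k => 1 + α k + β k) β (fun k => α (k + 1)) n).det := by
  set D : ℕ → R := fun n => (tridiagonal (fun k => 1 + α k + β k) β (fun k => α (k + 1)) n).det
  obtain ⟨n, rfl⟩ := Nat.exists_eq_succ_of_ne_zero hn
  obtain ⟨hD, hG⟩ := prod_le_and_prod_le_sub_of_recurrence (D := D) hα hβ det_fin_zero
    (by simp [D, tridiagonal]) (det_tridiagonal_add_two _ _ _) n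
  calc ∏ k ∈ Finset.range (n + 1), α k + ∏ k ∈ Finset.range (n + 1), (1 + β k)
      = ∏ k ∈ Finset.range (n + 1), α k + (1 + β n) * ∏ k ∈ Finset.range n, (1 + β k) := by
        rw [Finset.prod_range_succ_comm (fun k => 1 + β k)]
    _ ≤ D (n + 1) - (1 + β n) * D n + (1 + β n) * D n :=
        add_le_add hG (mul_le_mul_of_nonneg_left hD (add_nonneg zero_le_one (hβ n)))
    _ = D (n + 1) := sub_add_cancel _ _

end LowerBound

section LowerBidiagonal

/-- The `(n + 1) × n` lower bidiagonal matrix with diagonal `a` and subdiagonal `b`: the channel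
matrix of the successive relaying protocol, with a diagonal that need not be constant. -/
def lowerBidiagonal {R : Type*} [Zero R] (a b : ℕ → R) (n : ℕ) : Matrix (Fin (n + 1)) (Fin n) R :=
  of fun i j => if (i : ℕ) = j then a j else if (i : ℕ) = j + 1 then b j else 0

theorem lowerBidiagonal_apply {R : Type*} [AddZeroClass R] (a b : ℕ → R) {n : ℕ}
    (i : Fin (n + 1)) (j : Fin n) :
    lowerBidiagonal a b n i j =
      (if i = j.castSucc then a j else 0) + if i = j.succ then b j else 0 := by
  simp only [lowerBidiagonal, of_apply, Fin.ext_iff, Fin.val_castSucc, Fin.val_succ]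
  grind [add_zero, zero_add]

theorem lowerBidiagonal_conjTranspose_mul_self {R : Type*} [NonUnitalSemiring R] [StarRing R]
    (a b : ℕ → R) (n : ℕ) :
    (lowerBidiagonal a b n)ᴴ * lowerBidiagonal a b n =
      tridiagonal (fun k => star (a k) * a k + star (b k) * b k)
        (fun k => star (b k) * a (k + 1)) (fun k => star (a (k + 1)) * b k) n := by
  ext i j
  have hentry : ((lowerBidiagonal a b n)ᴴ * lowerBidiagonal a b n) i j =
      star (a i) * lowerBidiagonal a b n i.castSucc j +
        star (b i) * lowerBidiagonal a b n i.succ j := by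
    simp [mul_apply, lowerBidiagonal_apply _ _ _ i, add_mul, Finset.sum_add_distrib, apply_ite star]
  rw [hentry]
  simp only [lowerBidiagonal, tridiagonal, of_apply, Fin.val_castSucc, Fin.val_succ]
  grind [mul_zero, zero_add, add_zero]

theorem det_one_add_smul_lowerBidiagonal_mul_conjTranspose {𝕜 : Type*} [RCLike 𝕜] (a b : ℕ → 𝕜)
    (ρ : ℝ) (n : ℕ) :
    (1 + (ρ : 𝕜) • (lowerBidiagonal a b n * (lowerBidiagonal a b n)ᴴ)).det =
      ((tridiagonal (fun k => 1 + ρ * ‖a k‖ ^ 2 + ρ * ‖b k‖ ^ 2) (fun k => ρ * ‖b k‖ ^ 2)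
        (fun k => ρ * ‖a (k + 1)‖ ^ 2) n).det : 𝕜) := by
  rw [← smul_mul, det_one_add_mul_comm, Matrix.mul_smul, lowerBidiagonal_conjTranspose_mul_self,
    one_add_smul_tridiagonal, ← RCLike.algebraMap_eq_ofReal, map_det_tridiagonal]
  have hdiag (k : ℕ) : 1 + (ρ : 𝕜) * (star (a k) * a k + star (b k) * b k) =
      algebraMap ℝ 𝕜 (1 + ρ * ‖a k‖ ^ 2 + ρ * ‖b k‖ ^ 2) := by
    simp [RCLike.conj_mul, mul_add, add_assoc]
  have hoff (k : ℕ) : (ρ : 𝕜) * (star (b k) * a (k + 1)) * (ρ * (star (a (k + 1)) * b k)) =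
      algebraMap ℝ 𝕜 (ρ * ‖b k‖ ^ 2) * algebraMap ℝ 𝕜 (ρ * ‖a (k + 1)‖ ^ 2) := by
    simp only [RCLike.ofReal_mul, RCLike.ofReal_pow, ← RCLike.conj_mul, ← starRingEnd_apply]
    ring
  simp only [hdiag]
  exact det_tridiagonal_congr _ hoff n

end LowerBidiagonal

theorem stmt4_general {𝕜 : Type*} [RCLike 𝕜] (m : ℕ) (hm : 1 ≤ m) (a b : Fin m → 𝕜)
    (H : Matrix (Fin (m + 1)) (Fin m) 𝕜)
    (hH : ∀ i j, H i j =
      if (i : ℕ) = (j : ℕ) then a j else if (i : ℕ) = (j : ℕ) + 1 then b j else 0)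
    (ρ : ℝ) (hρ : 0 ≤ ρ) :
    ∏ j, (ρ * ‖a j‖ ^ 2) + ∏ j, (1 + ρ * ‖b j‖ ^ 2)
      ≤ RCLike.re (1 + (ρ : 𝕜) • (H * Hᴴ)).det ∧
    max (∏ j, (ρ * ‖a j‖ ^ 2)) (∏ j, (1 + ρ * ‖b j‖ ^ 2))
      ≤ RCLike.re (1 + (ρ : 𝕜) • (H * Hᴴ)).det := by
  have hsum : ∏ j, (ρ * ‖a j‖ ^ 2) + ∏ j, (1 + ρ * ‖b j‖ ^ 2)
      ≤ RCLike.re (1 + (ρ : 𝕜) • (H * Hᴴ)).det := by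
    let a' := Function.extend Fin.val a 0
    let b' := Function.extend Fin.val b 0
    have ha' (j : Fin m) : a' j = a j := Fin.val_injective.extend_apply a 0 j
    have hb' (j : Fin m) : b' j = b j := Fin.val_injective.extend_apply b 0 j
    obtain rfl : H = lowerBidiagonal a' b' m := by
      ext i j
      simp only [hH, lowerBidiagonal, of_apply, ha', hb']
    have hbound := prod_add_prod_one_add_le_det_tridiagonal (α := fun k => ρ * ‖a' k‖ ^ 2)
      (β := fun k => ρ * ‖b' k‖ ^ 2) (fun k => by positivity) (fun k => by positivity)
      (Nat.one_le_iff_ne_zero.mp hm)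
    simpa only [det_one_add_smul_lowerBidiagonal_mul_conjTranspose, RCLike.ofReal_re,
      Finset.prod_range, ha', hb'] using hbound
  have ha_nonneg : 0 ≤ ∏ j, (ρ * ‖a j‖ ^ 2) := by positivity
  have hb_nonneg : 0 ≤ ∏ j, (1 + ρ * ‖b j‖ ^ 2) := by positivity
  exact ⟨hsum, max_le (by linarith) (by linarith)⟩

/-- For the successive-relaying channel matrix `H` of size
`(m+1) × m`, for every `ρ ≥ 0`,
`det(I + ρ H Hᴴ) ≥ (ρ|a|²)^m + ∏ⱼ (1 + ρ|bⱼ|²)`, and in particular it is at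
least `max{(ρ|a|²)^m, ∏ⱼ (1 + ρ|bⱼ|²)}`. -/
theorem stmt4 (m : ℕ) (hm : 1 ≤ m) (a : ℂ) (b : Fin m → ℂ)
    (H : Matrix (Fin (m + 1)) (Fin m) ℂ)
    (hH : ∀ i j, H i j =
      if (i : ℕ) = (j : ℕ) then a else if (i : ℕ) = (j : ℕ) + 1 then b j else 0)
    (ρ : ℝ) (hρ : 0 ≤ ρ) :
    (ρ * ‖a‖ ^ 2) ^ m + ∏ j : Fin m, (1 + ρ * ‖b j‖ ^ 2)
      ≤ ((1 + (ρ : ℂ) • (H * H.conjTranspose)).det).re ∧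
    max ((ρ * ‖a‖ ^ 2) ^ m) (∏ j : Fin m, (1 + ρ * ‖b j‖ ^ 2))
      ≤ ((1 + (ρ : ℂ) • (H * H.conjTranspose)).det).re := by
  simpa using stmt4_general m hm (fun _ => a) b H hH ρ hρ
end

section
/- The L×L Gram matrix HᴴH satisfies det(HᴴH) = Σ_{k=0}^{L} |a|^{2k} · Π_{j=k+1}^{L} |b_j|² (where the empty product for k = L equals 1). In particular, if a ≠ 0 then det(HᴴH) ≥ |a|^{2L} > 0, so H has full column rank L. -/
open Matrix Filter

/-!
By the Cauchy–Binet formula, `det (Hᴴ * H)` is the sum of the squared moduli of the maximal minors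
of `H`. Deleting row `k` of the two-diagonal matrix `H` leaves a block diagonal matrix: a lower
triangular block with the first `k` entries of the main diagonal of `H` on its diagonal, and an
upper triangular block with the remaining entries of the subdiagonal. The minor is therefore
`a ^ k * ∏ j ≥ k, b j`, and its squared modulus is the `k`-th term of the formula. The term `k = L`
alone is `(‖a‖ ^ 2) ^ L`, which bounds the determinant from below.
-/

section CauchyBinet

variable {R m : Type*} [CommRing R]

lemma det_mul_eq_sum_det_submatrix_mul_prod {n : Type*} [Fintype m] [Fintype n] [DecidableEq n]
    (A : Matrix n m R) (B : Matrix m n R) :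
    (A * B).det = ∑ f : n → m, (A.submatrix id f).det * ∏ i, B (f i) i := by
  simp only [det_apply', mul_apply, Finset.prod_univ_sum, Finset.mul_sum, Fintype.piFinset_univ,
    Finset.sum_mul, submatrix_apply, id, Finset.prod_mul_distrib, mul_assoc]
  exact Finset.sum_comm

lemma sum_perm_det_submatrix_comp_mul_prod {n : Type*} [Fintype n] [DecidableEq n]
    (A : Matrix n m R) (B : Matrix m n R) (g : n → m) :
    ∑ σ : Equiv.Perm n, (A.submatrix id (g ∘ σ)).det * ∏ i, B (g (σ i)) i =
      (A.submatrix id g).det * (B.submatrix g id).det := by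
  have det_comp (σ : Equiv.Perm n) :
      (A.submatrix id (g ∘ σ)).det = σ.sign * (A.submatrix id g).det :=
    det_permute' σ (A.submatrix id g)
  simp only [det_comp, det_apply' (B.submatrix g id), Finset.mul_sum, submatrix_apply, id]
  exact Finset.sum_congr rfl fun σ _ ↦ by ring

lemma injective_orderEmbedding_comp_perm {n : ℕ} {α : Type*} [LinearOrder α] :
    Function.Injective fun p : (Fin n ↪o α) × Equiv.Perm (Fin n) ↦ (p.1 ∘ p.2 : Fin n → α) := by
  rintro ⟨g, σ⟩ ⟨g', σ'⟩ (h : g ∘ σ = g' ∘ σ')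
  have range_eq : Set.range g = Set.range g' := by
    rw [← σ.surjective.range_comp, h, σ'.surjective.range_comp]
  obtain rfl : g = g' := OrderEmbedding.range_inj.mp range_eq
  exact Prod.ext rfl (Equiv.ext fun i ↦ g.injective (congrFun h i))

lemma exists_orderEmbedding_comp_perm_eq {n : ℕ} {α : Type*} [LinearOrder α] {f : Fin n → α}
    (hf : Function.Injective f) : ∃ (g : Fin n ↪o α) (σ : Equiv.Perm (Fin n)), g ∘ σ = f := by
  have strictMono_sort : StrictMono (f ∘ Tuple.sort f) :=
    (Tuple.monotone_sort f).strictMono_of_injective (hf.comp (Tuple.sort f).injective)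
  exact ⟨OrderEmbedding.ofStrictMono _ strictMono_sort, (Tuple.sort f)⁻¹, by ext; simp⟩

theorem det_mul_eq_sum_orderEmbedding {n : ℕ} [Fintype m] [LinearOrder m]
    (A : Matrix (Fin n) m R) (B : Matrix m (Fin n) R) :
    (A * B).det = ∑ g : Fin n ↪o m, (A.submatrix id g).det * (B.submatrix g id).det := by
  have det_eq_zero (f : Fin n → m)
      (hf : f ∉ Set.range fun p : (Fin n ↪o m) × Equiv.Perm (Fin n) ↦ (p.1 ∘ p.2 : Fin n → m)) :
      (A.submatrix id f).det * ∏ i, B (f i) i = 0 := by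
    have not_injective : ¬ Function.Injective f := fun h ↦
      let ⟨g, σ, hgσ⟩ := exists_orderEmbedding_comp_perm_eq h
      hf ⟨(g, σ), hgσ⟩
    obtain ⟨i, j, hfij, hij⟩ := Function.not_injective_iff.mp not_injective
    rw [det_zero_of_column_eq hij fun k ↦ by simp [hfij], zero_mul]
  calc (A * B).det
    _ = ∑ f : Fin n → m, (A.submatrix id f).det * ∏ i, B (f i) i :=
      det_mul_eq_sum_det_submatrix_mul_prod A B
    _ = ∑ p : (Fin n ↪o m) × Equiv.Perm (Fin n),
          (A.submatrix id (p.1 ∘ p.2)).det * ∏ i, B (p.1 (p.2 i)) i :=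
      (Fintype.sum_of_injective _ injective_orderEmbedding_comp_perm _ _ det_eq_zero
        fun _ ↦ rfl).symm
    _ = ∑ g : Fin n ↪o m, (A.submatrix id g).det * (B.submatrix g id).det := by
      simp only [Fintype.sum_prod_type, sum_perm_det_submatrix_comp_mul_prod]

lemma bijective_succAboveOrderEmb (n : ℕ) :
    Function.Bijective (Fin.succAboveOrderEmb : Fin (n + 1) → (Fin n ↪o Fin (n + 1))) := by
  refine ⟨fun i j h ↦ Fin.succAbove_left_injective (congrArg DFunLike.coe h), fun g ↦ ?_⟩
  have card_compl : (Finset.univ.map g.toEmbedding)ᶜ.card = 1 := by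
    simp [Finset.card_compl]
  obtain ⟨k, hk⟩ := Finset.card_eq_one.mp card_compl
  have compl_range : (Set.range g)ᶜ = {k} := by
    ext i
    simpa using Finset.ext_iff.mp hk i
  exact ⟨k, OrderEmbedding.range_inj.mp <| by simp [← compl_range]⟩

theorem det_mul_eq_sum_succAbove {n : ℕ}
    (A : Matrix (Fin n) (Fin (n + 1)) R) (B : Matrix (Fin (n + 1)) (Fin n) R) :
    (A * B).det = ∑ k : Fin (n + 1),
      (A.submatrix id k.succAbove).det * (B.submatrix k.succAbove id).det := by
  rw [det_mul_eq_sum_orderEmbedding]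
  exact ((bijective_succAboveOrderEmb n).sum_comp fun g ↦
    (A.submatrix id g).det * (B.submatrix g id).det).symm

theorem det_conjTranspose_mul_self_eq_sum_succAbove [StarRing R] {n : ℕ}
    (A : Matrix (Fin (n + 1)) (Fin n) R) :
    (Aᴴ * A).det = ∑ k : Fin (n + 1),
      star (A.submatrix k.succAbove id).det * (A.submatrix k.succAbove id).det := by
  simp only [det_mul_eq_sum_succAbove, ← conjTranspose_submatrix, det_conjTranspose]

end CauchyBinet

section Bidiagonal

/-- The `(n + 1) × n` matrix with main diagonal `a`, subdiagonal `b` and zeros elsewhere. For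
constant `a` it is the channel matrix of the successive relaying protocol. Both diagonals are
indexed by the column. -/
def bidiagonal {R : Type*} [Zero R] {n : ℕ} (a b : Fin n → R) : Matrix (Fin (n + 1)) (Fin n) R :=
  of fun i j ↦ if i = j.castSucc then a j else if i = j.succ then b j else 0

lemma bidiagonal_submatrix_succ_succ {R : Type*} [Zero R] {n : ℕ} (a b : Fin (n + 1) → R) :
    (bidiagonal a b).submatrix Fin.succ Fin.succ = bidiagonal (Fin.tail a) (Fin.tail b) := by
  ext i j
  simp [bidiagonal, Fin.tail]

variable {R : Type*} [CommRing R]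

lemma det_bidiagonal_submatrix_succ {n : ℕ} (a b : Fin n → R) :
    ((bidiagonal a b).submatrix Fin.succ id).det = ∏ j, b j := by
  have isUpperTriangular : ((bidiagonal a b).submatrix Fin.succ id).IsUpperTriangular := by
    intro i j (hji : j < i)
    have succ_ne_castSucc : i.succ ≠ j.castSucc := by grind
    simp [bidiagonal, succ_ne_castSucc, hji.ne']
  rw [det_of_isUpperTriangular isUpperTriangular]
  refine Finset.prod_congr rfl fun j _ ↦ ?_
  simp [bidiagonal, j.castSucc_lt_succ.ne']

theorem det_bidiagonal_submatrix_succAbove {n : ℕ} (a b : Fin n → R) (k : Fin (n + 1)) :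
    ((bidiagonal a b).submatrix k.succAbove id).det =
      ∏ j, if j.castSucc < k then a j else b j := by
  induction n with
  | zero => simp
  | succ n ih =>
    cases k using Fin.cases with
    | zero => simpa using det_bidiagonal_submatrix_succ a b
    | succ k =>
      have row_zero (j : Fin n) :
          (bidiagonal a b).submatrix k.succ.succAbove id 0 j.succ = 0 := by
        simp [bidiagonal, eq_comm]
      have minor_eq :
          ((bidiagonal a b).submatrix k.succ.succAbove id).submatrix Fin.succ Fin.succ =
            (bidiagonal (Fin.tail a) (Fin.tail b)).submatrix k.succAbove id := by
        rw [← bidiagonal_submatrix_succ_succ]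
        ext i j
        simp
      rw [det_succ_row_zero, Fin.sum_univ_succ, Fin.prod_univ_succ]
      simp only [row_zero, Fin.succAbove_zero, minor_eq, ih]
      simp [bidiagonal, Fin.tail]

end Bidiagonal

section RCLike

variable {𝕜 : Type*} [RCLike 𝕜]

theorem det_conjTranspose_mul_self_bidiagonal {n : ℕ} (a b : Fin n → 𝕜) :
    ((bidiagonal a b)ᴴ * bidiagonal a b).det =
      ((∑ k : Fin (n + 1), (∏ j with j.castSucc < k, ‖a j‖ ^ 2) *
        ∏ j with k ≤ j.castSucc, ‖b j‖ ^ 2 : ℝ) : 𝕜) := by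
  rw [det_conjTranspose_mul_self_eq_sum_succAbove, RCLike.ofReal_sum]
  refine Finset.sum_congr rfl fun k _ ↦ ?_
  rw [det_bidiagonal_submatrix_succAbove, Finset.prod_ite, RCLike.star_def, RCLike.conj_mul]
  simp [Finset.prod_pow, mul_pow]

lemma prod_norm_sq_le_re_det_conjTranspose_mul_self_bidiagonal {n : ℕ} (a b : Fin n → 𝕜) :
    ∏ j, ‖a j‖ ^ 2 ≤ RCLike.re ((bidiagonal a b)ᴴ * bidiagonal a b).det := by
  have last_term : (∏ j with j.castSucc < Fin.last n, ‖a j‖ ^ 2) *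
      ∏ j with Fin.last n ≤ j.castSucc, ‖b j‖ ^ 2 = ∏ j, ‖a j‖ ^ 2 := by
    simp [Fin.castSucc_lt_last, Fin.last_le_iff, Fin.castSucc_ne_last]
  rw [det_conjTranspose_mul_self_bidiagonal, RCLike.ofReal_re, Fin.sum_univ_castSucc, last_term]
  exact le_add_of_nonneg_left (by positivity)

open scoped ComplexOrder in
lemma rank_eq_of_det_conjTranspose_mul_self_ne_zero {m n : Type*} [Fintype m] [Fintype n]
    [DecidableEq n] {A : Matrix m n 𝕜} (hA : (Aᴴ * A).det ≠ 0) : A.rank = Fintype.card n := by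
  rw [← rank_conjTranspose_mul_self, rank_of_isUnit]
  exact (isUnit_iff_isUnit_det _).mpr hA.isUnit

theorem stmt5_general {n : ℕ} (a b : Fin n → 𝕜) :
    ((bidiagonal a b)ᴴ * bidiagonal a b).det =
      ((∑ k : Fin (n + 1), (∏ j with j.castSucc < k, ‖a j‖ ^ 2) *
        ∏ j with k ≤ j.castSucc, ‖b j‖ ^ 2 : ℝ) : 𝕜) ∧
    ((∀ j, a j ≠ 0) →
      ∏ j, ‖a j‖ ^ 2 ≤ RCLike.re ((bidiagonal a b)ᴴ * bidiagonal a b).det ∧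
      (bidiagonal a b).rank = n) := by
  have le_det := prod_norm_sq_le_re_det_conjTranspose_mul_self_bidiagonal a b
  refine ⟨det_conjTranspose_mul_self_bidiagonal a b, fun ha ↦ ⟨le_det, ?_⟩⟩
  have prod_pos : 0 < ∏ j, ‖a j‖ ^ 2 := Finset.prod_pos fun j _ ↦ by simp [ha j]
  have det_ne_zero : ((bidiagonal a b)ᴴ * bidiagonal a b).det ≠ 0 := fun h ↦ by
    rw [h, map_zero] at le_det
    exact prod_pos.not_ge le_det
  simpa using rank_eq_of_det_conjTranspose_mul_self_ne_zero det_ne_zero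

end RCLike

/-- For the successive-relaying channel matrix `H`, the Gram
determinant satisfies `det(HᴴH) = ∑_{k=0}^{L} |a|^{2k} ∏_{j=k+1}^{L} |bⱼ|²`
(with `b` zero-indexed in Lean, the product over math indices `j = k+1, …, L`
is over Lean indices `j` with `k ≤ j`); in particular, if `a ≠ 0` then `H` has
full column rank `L`. -/
theorem stmt5 (L : ℕ) (hL : 1 ≤ L) (a : ℂ) (b : Fin L → ℂ)
    (H : Matrix (Fin (L + 1)) (Fin L) ℂ)
    (hH : ∀ i j, H i j =
      if (i : ℕ) = (j : ℕ) then a else if (i : ℕ) = (j : ℕ) + 1 then b j else 0) :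
    (H.conjTranspose * H).det =
      ((∑ k ∈ Finset.range (L + 1), (‖a‖ ^ 2) ^ k *
          ∏ j ∈ Finset.univ.filter (fun j : Fin L => k ≤ (j : ℕ)), ‖b j‖ ^ 2 : ℝ) : ℂ) ∧
    (a ≠ 0 → (‖a‖ ^ 2) ^ L ≤ ((H.conjTranspose * H).det).re ∧ H.rank = L) := by
  obtain rfl : H = bidiagonal (fun _ ↦ a) b := by ext i j; simp [hH, bidiagonal, Fin.ext_iff]
  obtain ⟨det_eq, full_rank⟩ := stmt5_general (fun _ ↦ a) b
  refine ⟨?_, fun ha ↦ by simpa using full_rank fun _ ↦ ha⟩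
  simpa [Finset.sum_range, Fin.lt_def, Fin.le_def, Fin.card_filter_val_lt, Fin.is_le] using det_eq
end

section
/- Let X₀ and X₁ be independent random variables, each exponentially distributed with rate 1 (the squared magnitudes of the direct-link and relay-link Rayleigh fading coefficients). Fix an integer L ≥ 1 and a real r with 0 < r < L/(L+1), and let P_out(ρ) = P( log₂(1 + ρ(X₀ + X₁)) < ((L+1)/L)·r·log₂ ρ ). Then lim_{ρ→∞} −log P_out(ρ)/log ρ = 2(1 − ((L+1)/L)·r). That is, conditioned on correct decoding at the relays, the successive relaying scheme achieves the diversity–multiplexing tradeoff d(r) = 2(1 − ((L+1)/L) r)⁺. -/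
open Filter MeasureTheory ProbabilityTheory

/-!
Since `1 + ρS < ρ ^ s` means `S < (ρ ^ s - 1) / ρ`, outage is the event that the total gain `S`
lies below a threshold of order `ρ ^ (s - 1)`. For `s < 1` the threshold tends to `0`, so the
outage probability decays like the threshold raised to the exponent of the distribution function
of `S` at `0`; for `s ≥ 1` the threshold stays bounded away from `0`, and so does the outage
probability. An exponential variable has exponent `1`, and exponents of independent nonnegative
variables add up, because
`P(X < t / 2) * P(Y < t / 2) ≤ P(X + Y < t) ≤ P(X < t) * P(Y < t)`.
-/

open Set Topology Bornology

section LogAsymptotics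

variable {α : Type*} {l : Filter α} {f g : α → ℝ} {c d : ℝ}

lemma tendsto_log_div_log_of_tendsto_div_rpow (hc : c ≠ 0) (hg : ∀ᶠ a in l, 0 < g a)
    (hlog : Tendsto (fun a => Real.log (g a)) l (cobounded ℝ))
    (hfg : Tendsto (fun a => f a / g a ^ d) l (𝓝 c)) :
    Tendsto (fun a => Real.log (f a) / Real.log (g a)) l (𝓝 d) := by
  have hsum : Tendsto (fun a => Real.log (f a / g a ^ d) * (Real.log (g a))⁻¹ + d) l (𝓝 d) := by
    simpa using ((hfg.log hc).mul (tendsto_inv₀_cobounded.comp hlog)).add_const d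
  refine hsum.congr' ?_
  filter_upwards [hg, hfg.eventually_ne hc, hlog.eventually_ne_cobounded 0] with a hga hfa hla
  have hf : f a ≠ 0 := (div_ne_zero_iff.mp hfa).1
  rw [Real.log_div hf (Real.rpow_pos_of_pos hga d).ne', Real.log_rpow hga]
  field_simp
  ring

lemma tendsto_log_nhdsGT_zero_cobounded : Tendsto Real.log (𝓝[>] 0) (cobounded ℝ) :=
  Real.tendsto_log_nhdsGT_zero.mono_right (le_sup_left.trans_eq IsOrderBornology.cobounded_eq.symm)

lemma tendsto_log_const_mul_div_log_nhdsGT_zero (hc : c ≠ 0) :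
    Tendsto (fun t => Real.log (c * t) / Real.log t) (𝓝[>] 0) (𝓝 1) := by
  refine tendsto_log_div_log_of_tendsto_div_rpow hc self_mem_nhdsWithin
    tendsto_log_nhdsGT_zero_cobounded (tendsto_const_nhds.congr' ?_)
  filter_upwards [self_mem_nhdsWithin] with t ht
  rw [Real.rpow_one, mul_div_cancel_right₀ c (ne_of_gt ht)]

lemma tendsto_one_sub_exp_neg_mul_div_nhdsGT_zero (c : ℝ) :
    Tendsto (fun t => (1 - Real.exp (-(c * t))) / t) (𝓝[>] 0) (𝓝 c) := by
  have hderiv : HasDerivAt (fun t => 1 - Real.exp (-(c * t))) c 0 := by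
    simpa using ((((hasDerivAt_id (0 : ℝ)).const_mul c).fun_neg).exp).const_sub 1
  simpa [div_eq_inv_mul] using hderiv.tendsto_slope_zero_right

end LogAsymptotics

section OutageThreshold

/-- The gain below which a link of SNR `ρ` cannot support the rate `s * log ρ`, that is, the
solution `x` of `1 + ρ * x = ρ ^ s`. -/
noncomputable def outageThreshold (s ρ : ℝ) : ℝ := (ρ ^ s - 1) / ρ

variable {b s ρ x : ℝ}

lemma logb_one_add_mul_lt_iff (hb : 1 < b) (hρ : 0 < ρ) (hx : 0 ≤ x) :
    Real.logb b (1 + ρ * x) < s * Real.logb b ρ ↔ x < outageThreshold s ρ := by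
  rw [← Real.logb_rpow_eq_mul_logb_of_pos hρ,
    Real.logb_lt_logb_iff hb (by positivity) (by positivity), outageThreshold, lt_div_iff₀ hρ,
    lt_sub_iff_add_lt', mul_comm]

lemma outageThreshold_pos (hs : 0 < s) (hρ : 1 < ρ) : 0 < outageThreshold s ρ :=
  div_pos (sub_pos.mpr (Real.one_lt_rpow hρ hs)) (one_pos.trans hρ)

lemma outageThreshold_div_rpow (hρ : 0 < ρ) :
    outageThreshold s ρ / ρ ^ (s - 1) = 1 - ρ ^ (-s) := by
  have hpow : ρ ^ s ≠ 0 := (Real.rpow_pos_of_pos hρ s).ne'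
  rw [outageThreshold, Real.rpow_sub_one hρ.ne', Real.rpow_neg hρ.le]
  field_simp

lemma tendsto_outageThreshold_div_rpow (hs : 0 < s) :
    Tendsto (fun ρ => outageThreshold s ρ / ρ ^ (s - 1)) atTop (𝓝 1) := by
  have hlim : Tendsto (fun ρ : ℝ => 1 - ρ ^ (-s)) atTop (𝓝 1) := by
    simpa using (tendsto_rpow_neg_atTop hs).const_sub 1
  refine hlim.congr' ?_
  filter_upwards [eventually_gt_atTop 0] with ρ hρ using (outageThreshold_div_rpow hρ).symm

lemma tendsto_log_outageThreshold_div_log (hs : 0 < s) :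
    Tendsto (fun ρ => Real.log (outageThreshold s ρ) / Real.log ρ) atTop (𝓝 (s - 1)) :=
  tendsto_log_div_log_of_tendsto_div_rpow one_ne_zero (eventually_gt_atTop 0)
    (Real.tendsto_log_atTop.mono_right (le_sup_right.trans_eq IsOrderBornology.cobounded_eq.symm))
    (tendsto_outageThreshold_div_rpow hs)

lemma tendsto_outageThreshold_nhdsGT_zero (hs : 0 < s) (hs1 : s < 1) :
    Tendsto (outageThreshold s) atTop (𝓝[>] 0) := by
  refine tendsto_nhdsWithin_iff.mpr ⟨?_, ?_⟩
  · have hpow : Tendsto (fun ρ : ℝ => ρ ^ (s - 1)) atTop (𝓝 0) := by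
      simpa using tendsto_rpow_neg_atTop (sub_pos.mpr hs1)
    have hprod := (tendsto_outageThreshold_div_rpow hs).mul hpow
    rw [mul_zero] at hprod
    refine hprod.congr' ?_
    filter_upwards [eventually_gt_atTop 0] with ρ hρ
    exact div_mul_cancel₀ _ (Real.rpow_pos_of_pos hρ _).ne'
  · filter_upwards [eventually_gt_atTop 1] with ρ hρ using outageThreshold_pos hs hρ

lemma half_le_outageThreshold (hs : 1 ≤ s) (hρ : 2 ≤ ρ) : 1 / 2 ≤ outageThreshold s ρ := by
  have hpow : ρ ≤ ρ ^ s := Real.self_le_rpow_of_one_le (by linarith) hs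
  rw [outageThreshold, le_div_iff₀ (by linarith)]
  linarith

end OutageThreshold

section DiversityOrder

variable {Ω : Type*} [MeasurableSpace Ω] {μ : Measure Ω} {X Y : Ω → ℝ} {d e s : ℝ}

/-- The nonnegative random gain `X` has diversity order `d`: its distribution function at `t`
behaves like `t ^ d` on the logarithmic scale as `t → 0`. Positivity of the distribution function
is required separately because `Real.log 0 = 0` would otherwise give diversity order `0` to a gain
bounded away from `0`. -/
structure HasDiversityOrder (X : Ω → ℝ) (d : ℝ) (μ : Measure Ω) : Prop where
  ae_nonneg : ∀ᵐ ω ∂μ, 0 ≤ X ω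
  measureReal_pos : ∀ t > 0, 0 < μ.real {ω | X ω < t}
  tendsto_log_div_log :
    Tendsto (fun t => Real.log (μ.real {ω | X ω < t}) / Real.log t) (𝓝[>] 0) (𝓝 d)

section Exponential

variable {c : ℝ}

lemma measureReal_lt_of_hasLaw_expMeasure (hc : 0 < c) (hX : HasLaw X (expMeasure c) μ) {t : ℝ}
    (ht : 0 ≤ t) : μ.real {ω | X ω < t} = 1 - Real.exp (-(c * t)) := by
  have := isProbabilityMeasure_expMeasure hc
  have : NullSingletonClass (expMeasure c) :=
    inferInstanceAs (NullSingletonClass (volume.withDensity (gammaPDF 1 c)))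
  calc μ.real {ω | X ω < t} = (expMeasure c).real (Iio t) :=
        hX.measureReal_eq measurableSet_Iio
    _ = (expMeasure c).real (Iic t) := measureReal_congr Iio_ae_eq_Iic
    _ = 1 - Real.exp (-(c * t)) := by rw [← cdf_eq_real, cdf_expMeasure_eq hc, if_pos ht]

lemma ae_nonneg_of_hasLaw_expMeasure (hc : 0 < c) (hX : HasLaw X (expMeasure c) μ) :
    ∀ᵐ ω ∂μ, 0 ≤ X ω := by
  have := isProbabilityMeasure_expMeasure hc
  have := hX.isProbabilityMeasure
  have hneg : μ.real {ω | X ω < 0} = 0 := by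
    simpa using measureReal_lt_of_hasLaw_expMeasure hc hX le_rfl
  simpa only [ae_iff, not_le] using (measureReal_eq_zero_iff).mp hneg

lemma hasDiversityOrder_one_of_hasLaw_expMeasure (hc : 0 < c) (hX : HasLaw X (expMeasure c) μ) :
    HasDiversityOrder X 1 μ where
  ae_nonneg := ae_nonneg_of_hasLaw_expMeasure hc hX
  measureReal_pos t ht := by
    rw [measureReal_lt_of_hasLaw_expMeasure hc hX ht.le, sub_pos, Real.exp_lt_one_iff, neg_lt_zero]
    exact mul_pos hc ht
  tendsto_log_div_log := by
    refine tendsto_log_div_log_of_tendsto_div_rpow hc.ne' self_mem_nhdsWithin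
      tendsto_log_nhdsGT_zero_cobounded
      ((tendsto_one_sub_exp_neg_mul_div_nhdsGT_zero c).congr' ?_)
    filter_upwards [self_mem_nhdsWithin] with t ht
    rw [measureReal_lt_of_hasLaw_expMeasure hc hX (le_of_lt ht), Real.rpow_one]

end Exponential

section IndependentSum

lemma measureReal_lt_and_lt_eq_mul (hindep : IndepFun X Y μ) (t u : ℝ) :
    μ.real {ω | X ω < t ∧ Y ω < u} = μ.real {ω | X ω < t} * μ.real {ω | Y ω < u} := by
  have hmul := hindep.measure_inter_preimage_eq_mul (Iio t) (Iio u)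
    measurableSet_Iio measurableSet_Iio
  exact (congrArg ENNReal.toReal hmul).trans ENNReal.toReal_mul

variable [IsFiniteMeasure μ]

lemma measureReal_add_lt_le_mul (hX : ∀ᵐ ω ∂μ, 0 ≤ X ω) (hY : ∀ᵐ ω ∂μ, 0 ≤ Y ω)
    (hindep : IndepFun X Y μ) (t : ℝ) :
    μ.real {ω | X ω + Y ω < t} ≤ μ.real {ω | X ω < t} * μ.real {ω | Y ω < t} := by
  rw [← measureReal_lt_and_lt_eq_mul hindep]
  refine ENNReal.toReal_mono (measure_ne_top μ _) (measure_mono_ae ?_)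
  filter_upwards [hX, hY] with ω hXω hYω hlt
  exact ⟨(le_add_of_nonneg_right hYω).trans_lt hlt, (le_add_of_nonneg_left hXω).trans_lt hlt⟩

lemma mul_le_measureReal_add_lt_add (hindep : IndepFun X Y μ) (t u : ℝ) :
    μ.real {ω | X ω < t} * μ.real {ω | Y ω < u} ≤ μ.real {ω | X ω + Y ω < t + u} := by
  rw [← measureReal_lt_and_lt_eq_mul hindep]
  exact measureReal_mono fun ω hω => add_lt_add hω.1 hω.2

lemma mul_half_le_measureReal_add_lt (hindep : IndepFun X Y μ) (t : ℝ) :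
    μ.real {ω | X ω < 1 / 2 * t} * μ.real {ω | Y ω < 1 / 2 * t} ≤
      μ.real {ω | X ω + Y ω < t} := by
  simpa only [← add_mul, add_halves, one_mul] using
    mul_le_measureReal_add_lt_add hindep (1 / 2 * t) (1 / 2 * t)

end IndependentSum

section Outage

lemma measureReal_outage_eq {b ρ : ℝ} (hX : ∀ᵐ ω ∂μ, 0 ≤ X ω) (hb : 1 < b) (hρ : 0 < ρ) :
    μ.real {ω | Real.logb b (1 + ρ * X ω) < s * Real.logb b ρ} =
      μ.real {ω | X ω < outageThreshold s ρ} := by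
  refine measureReal_congr (eventuallyEq_set.mpr ?_)
  filter_upwards [hX] with ω hω using logb_one_add_mul_lt_iff hb hρ hω

lemma tendsto_log_measureReal_lt_outageThreshold_of_one_le [IsFiniteMeasure μ]
    (hhalf : 0 < μ.real {ω | X ω < 1 / 2}) (hs : 1 ≤ s) :
    Tendsto (fun ρ => Real.log (μ.real {ω | X ω < outageThreshold s ρ}) / Real.log ρ) atTop
      (𝓝 0) := by
  have hmono {ρ : ℝ} (hρ : 2 ≤ ρ) :
      μ.real {ω | X ω < 1 / 2} ≤ μ.real {ω | X ω < outageThreshold s ρ} :=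
    measureReal_mono fun ω hω => hω.trans_le (half_le_outageThreshold hs hρ)
  refine tendsto_of_tendsto_of_tendsto_of_le_of_le'
    (Real.tendsto_log_atTop.const_div_atTop (Real.log (μ.real {ω | X ω < 1 / 2})))
    (Real.tendsto_log_atTop.const_div_atTop (Real.log (μ.real univ))) ?_ ?_
  · filter_upwards [eventually_ge_atTop 2] with ρ hρ
    have hlog : 0 ≤ Real.log ρ := Real.log_nonneg (by linarith)
    gcongr ?_ / _
    exact Real.log_le_log hhalf (hmono hρ)
  · filter_upwards [eventually_ge_atTop 2] with ρ hρ
    have hlog : 0 ≤ Real.log ρ := Real.log_nonneg (by linarith)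
    gcongr ?_ / _
    exact Real.log_le_log (hhalf.trans_le (hmono hρ)) (measureReal_mono (subset_univ _))

end Outage

namespace HasDiversityOrder

lemma tendsto_log_div_of_tendsto_log_div {α : Type*} {l : Filter α} {g h : α → ℝ} {κ : ℝ}
    (hX : HasDiversityOrder X d μ) (hg : Tendsto g l (𝓝[>] 0))
    (hgh : Tendsto (fun a => Real.log (g a) / h a) l (𝓝 κ)) :
    Tendsto (fun a => Real.log (μ.real {ω | X ω < g a}) / h a) l (𝓝 (d * κ)) := by
  refine ((hX.tendsto_log_div_log.comp hg).mul hgh).congr' ?_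
  filter_upwards [(tendsto_log_nhdsGT_zero_cobounded.comp hg).eventually_ne_cobounded 0]
    with a hlog
  exact div_mul_div_cancel₀ hlog

lemma tendsto_log_const_mul_div_log {c : ℝ} (hc : 0 < c) (hX : HasDiversityOrder X d μ) :
    Tendsto (fun t => Real.log (μ.real {ω | X ω < c * t}) / Real.log t) (𝓝[>] 0) (𝓝 d) := by
  have hmul : Tendsto (fun t => c * t) (𝓝[>] 0) (𝓝[>] 0) := by
    refine tendsto_nhdsWithin_iff.mpr ⟨?_, ?_⟩
    · simpa using (tendsto_id.const_mul c).mono_left (nhdsWithin_le_nhds (a := (0 : ℝ)))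
    · filter_upwards [self_mem_nhdsWithin] with t ht using mul_pos hc ht
  simpa only [mul_one] using
    hX.tendsto_log_div_of_tendsto_log_div hmul (tendsto_log_const_mul_div_log_nhdsGT_zero hc.ne')

variable [IsFiniteMeasure μ]

lemma measureReal_add_lt_pos (hX : HasDiversityOrder X d μ) (hY : HasDiversityOrder Y e μ)
    (hindep : IndepFun X Y μ) {t : ℝ} (ht : 0 < t) : 0 < μ.real {ω | X ω + Y ω < t} :=
  (mul_pos (hX.measureReal_pos _ (by positivity)) (hY.measureReal_pos _ (by positivity))).trans_le
    (mul_half_le_measureReal_add_lt hindep t)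

lemma add (hX : HasDiversityOrder X d μ) (hY : HasDiversityOrder Y e μ)
    (hindep : IndepFun X Y μ) : HasDiversityOrder (fun ω => X ω + Y ω) (d + e) μ where
  ae_nonneg := by
    filter_upwards [hX.ae_nonneg, hY.ae_nonneg] with ω hXω hYω using add_nonneg hXω hYω
  measureReal_pos _ ht := hX.measureReal_add_lt_pos hY hindep ht
  tendsto_log_div_log := by
    have hupper := (hX.tendsto_log_const_mul_div_log one_half_pos).add
      (hY.tendsto_log_const_mul_div_log one_half_pos)
    have hlower := hX.tendsto_log_div_log.add hY.tendsto_log_div_log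
    have hunit : ∀ᶠ t : ℝ in 𝓝[>] 0, 0 < t ∧ t < 1 := Ioo_mem_nhdsGT one_pos
    refine tendsto_of_tendsto_of_tendsto_of_le_of_le' hlower hupper ?_ ?_
    · filter_upwards [hunit] with t ⟨ht, ht1⟩
      have hX0 := hX.measureReal_pos t ht
      have hY0 := hY.measureReal_pos t ht
      have hsum := hX.measureReal_add_lt_pos hY hindep ht
      rw [← add_div, ← Real.log_mul hX0.ne' hY0.ne']
      exact div_le_div_of_nonpos_of_le (Real.log_nonpos ht.le ht1.le) (Real.log_le_log hsum
        (measureReal_add_lt_le_mul hX.ae_nonneg hY.ae_nonneg hindep t))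
    · filter_upwards [hunit] with t ⟨ht, ht1⟩
      have hX0 := hX.measureReal_pos (1 / 2 * t) (by positivity)
      have hY0 := hY.measureReal_pos (1 / 2 * t) (by positivity)
      rw [← add_div, ← Real.log_mul hX0.ne' hY0.ne']
      exact div_le_div_of_nonpos_of_le (Real.log_nonpos ht.le ht1.le)
        (Real.log_le_log (mul_pos hX0 hY0) (mul_half_le_measureReal_add_lt hindep t))

lemma tendsto_log_lt_outageThreshold (hX : HasDiversityOrder X d μ) (hs : 0 < s) :
    Tendsto (fun ρ => Real.log (μ.real {ω | X ω < outageThreshold s ρ}) / Real.log ρ) atTop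
      (𝓝 (-(d * max (1 - s) 0))) := by
  rcases lt_or_ge s 1 with hs1 | hs1
  · have hlim := hX.tendsto_log_div_of_tendsto_log_div (tendsto_outageThreshold_nhdsGT_zero hs hs1)
      (tendsto_log_outageThreshold_div_log hs)
    rwa [max_eq_left (sub_nonneg.mpr hs1.le), ← mul_neg, neg_sub]
  · rw [max_eq_right (sub_nonpos.mpr hs1), mul_zero, neg_zero]
    exact tendsto_log_measureReal_lt_outageThreshold_of_one_le
      (hX.measureReal_pos _ one_half_pos) hs1

lemma tendsto_neg_log_outage_div_log {b : ℝ} (hX : HasDiversityOrder X d μ) (hb : 1 < b)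
    (hs : 0 < s) :
    Tendsto (fun ρ => -Real.log (μ.real {ω | Real.logb b (1 + ρ * X ω) < s * Real.logb b ρ}) /
      Real.log ρ) atTop (𝓝 (d * max (1 - s) 0)) := by
  have hlim := (hX.tendsto_log_lt_outageThreshold hs).neg
  rw [neg_neg] at hlim
  refine hlim.congr' ?_
  filter_upwards [eventually_gt_atTop 0] with ρ hρ
  rw [measureReal_outage_eq hX.ae_nonneg hb hρ, neg_div]

end HasDiversityOrder

end DiversityOrder

theorem stmt11_general {Ω : Type*} [MeasurableSpace Ω] {μ : Measure Ω} [IsFiniteMeasure μ]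
    {X₀ X₁ : Ω → ℝ} {d₀ d₁ b s : ℝ}
    (hX₀ : HasDiversityOrder X₀ d₀ μ) (hX₁ : HasDiversityOrder X₁ d₁ μ)
    (hindep : IndepFun X₀ X₁ μ) (hb : 1 < b) (hs : 0 < s) :
    Tendsto (fun ρ : ℝ =>
        -Real.log (μ.real {ω | Real.logb b (1 + ρ * (X₀ ω + X₁ ω)) < s * Real.logb b ρ}) /
          Real.log ρ)
      atTop (𝓝 ((d₀ + d₁) * max (1 - s) 0)) :=
  (hX₀.add hX₁ hindep).tendsto_neg_log_outage_div_log hb hs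

/-- If `X₀, X₁` are independent rate-1 exponential random
variables, `L ≥ 1` and `0 < r < L/(L+1)`, then the outage probability
`P_out(ρ) = P(log₂(1 + ρ(X₀+X₁)) < ((L+1)/L) r log₂ ρ)` satisfies
`−log P_out(ρ)/log ρ → 2(1 − ((L+1)/L) r)` as `ρ → ∞`: the successive relaying
scheme achieves the diversity–multiplexing tradeoff `d(r) = 2(1−((L+1)/L)r)⁺`. -/
theorem stmt11 {Ω : Type*} [MeasurableSpace Ω] (μ : Measure Ω)
    [IsProbabilityMeasure μ] (X₀ X₁ : Ω → ℝ)
    (hm0 : Measurable X₀) (hm1 : Measurable X₁)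
    (h0 : Measure.map X₀ μ = expMeasure 1)
    (h1 : Measure.map X₁ μ = expMeasure 1)
    (hindep : IndepFun X₀ X₁ μ)
    (L : ℕ) (hL : 1 ≤ L) (r : ℝ) (hr : 0 < r) (hrL : r < (L : ℝ) / (L + 1)) :
    Tendsto (fun ρ : ℝ =>
        -Real.log ((μ {ω | Real.logb 2 (1 + ρ * (X₀ ω + X₁ ω)) <
            ((L : ℝ) + 1) / (L : ℝ) * r * Real.logb 2 ρ}).toReal) / Real.log ρ)
      atTop (nhds (2 * (1 - ((L : ℝ) + 1) / (L : ℝ) * r))) := by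
  have hs1 : ((L : ℝ) + 1) / L * r < 1 := by
    rwa [← inv_div, inv_mul_lt_one₀ (by positivity)]
  have hX₀ := hasDiversityOrder_one_of_hasLaw_expMeasure one_pos ⟨hm0.aemeasurable, h0⟩
  have hX₁ := hasDiversityOrder_one_of_hasLaw_expMeasure one_pos ⟨hm1.aemeasurable, h1⟩
  have hlim := stmt11_general hX₀ hX₁ hindep one_lt_two (s := ((L : ℝ) + 1) / L * r)
    (by positivity)
  rwa [one_add_one_eq_two, max_eq_left (sub_nonneg.mpr hs1.le)] at hlim
end

section
/- If a ≠ 0, then lim_{ρ→∞} [ (1/(L+1)) · log₂ det(I_{L+1} + ρ H Hᴴ) ] / log₂ ρ = L/(L+1). That is, the successive relaying scheme under interference-free relaying achieves multiplexing gain L/(L+1), which tends to 1 as the frame length L grows. -/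
open Matrix Filter

/-!
If `A` is positive semidefinite with eigenvalues `λᵢ ≥ 0`, then `det (1 + ρ A) = ∏ (1 + ρ λᵢ)`.
A factor with `λᵢ > 0` grows like `ρ` and the others are `1`, so the determinant grows like
`ρ ^ rank A`. For `A = H Hᴴ` this exponent is `rank H`, and the first `L` rows of the relaying
matrix form a lower triangular block with diagonal `a ≠ 0`, so `rank H = L`.

Growth exponents are limits of `logb ρ x = log₂ x / log₂ ρ`, whose base is the variable.
-/

section VariableBase

theorem logb_div_logb_eq_logb {b : ℝ} (hb : 1 < b) (x y : ℝ) :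
    Real.logb b y / Real.logb b x = Real.logb x y := by
  have hlog : Real.log b ≠ 0 := (Real.log_pos hb).ne'
  simp only [Real.logb, div_div_div_cancel_right₀ hlog]

theorem tendsto_logb_base_one_add_mul_of_pos {c : ℝ} (hc : 0 < c) :
    Tendsto (fun x : ℝ => Real.logb x (1 + x * c)) atTop (nhds 1) := by
  have hinv : Tendsto (fun x : ℝ => x⁻¹ + c) atTop (nhds c) := by
    simpa only [zero_add] using tendsto_inv_atTop_zero.add_const c
  have hquot : Tendsto (fun x : ℝ => 1 + Real.logb x (x⁻¹ + c)) atTop (nhds 1) := by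
    simpa only [add_zero, Real.log_div_log] using
      ((hinv.log hc.ne').div_atTop Real.tendsto_log_atTop).const_add 1
  refine hquot.congr' ?_
  filter_upwards [eventually_gt_atTop 1] with x hx
  have hx₀ : 0 < x := one_pos.trans hx
  have hfactor : 1 + x * c = x * (x⁻¹ + c) := by field_simp
  rw [hfactor, Real.logb_mul hx₀.ne' (by positivity), Real.logb_self_eq_one hx]

theorem tendsto_logb_base_one_add_mul {c : ℝ} (hc : 0 ≤ c) :
    Tendsto (fun x : ℝ => Real.logb x (1 + x * c)) atTop (nhds (if c ≠ 0 then 1 else 0)) := by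
  rcases hc.eq_or_lt with rfl | hpos
  · simp
  · simpa only [if_pos hpos.ne'] using tendsto_logb_base_one_add_mul_of_pos hpos

end VariableBase

section Determinant

variable {𝕜 m n : Type*} [RCLike 𝕜] [Fintype m] [DecidableEq m] [Fintype n]

theorem det_one_add_smul_eq_prod_eigenvalues {A : Matrix m m 𝕜} (hA : A.IsHermitian) (z : 𝕜) :
    (1 + z • A).det = ∏ i, (1 + z * (hA.eigenvalues i : 𝕜)) := by
  let U : Matrix m m 𝕜 := hA.eigenvectorUnitary
  let D : Matrix m m 𝕜 := diagonal (RCLike.ofReal ∘ hA.eigenvalues)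
  have hspectral : A = U * D * star U := hA.spectral_theorem
  have hunitary : star U * U = 1 := Unitary.coe_star_mul_self hA.eigenvectorUnitary
  calc (1 + z • A).det = (1 + (z • (U * D)) * star U).det := by
        rw [Matrix.smul_mul, ← hspectral]
    _ = (1 + star U * (z • (U * D))).det := det_one_add_mul_comm _ _
    _ = (1 + z • D).det := by rw [Matrix.mul_smul, ← Matrix.mul_assoc, hunitary, Matrix.one_mul]
    _ = ∏ i, (1 + z * (hA.eigenvalues i : 𝕜)) := by
        rw [← diagonal_one, ← diagonal_smul, diagonal_add, det_diagonal]
        rfl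

theorem re_det_one_add_ofReal_smul_eq_prod_eigenvalues {A : Matrix m m 𝕜} (hA : A.IsHermitian)
    (ρ : ℝ) : RCLike.re (1 + (ρ : 𝕜) • A).det = ∏ i, (1 + ρ * hA.eigenvalues i) := by
  rw [det_one_add_smul_eq_prod_eigenvalues hA]
  exact_mod_cast RCLike.ofReal_re (K := 𝕜) (∏ i, (1 + ρ * hA.eigenvalues i))

theorem rank_eq_sum_eigenvalues_ne_zero {A : Matrix m m 𝕜} (hA : A.IsHermitian) :
    (A.rank : ℝ) = ∑ i, if hA.eigenvalues i ≠ 0 then 1 else 0 := by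
  rw [hA.rank_eq_card_non_zero_eigs, Fintype.card_subtype, Finset.sum_boole]

open scoped ComplexOrder

theorem tendsto_logb_base_det_one_add_smul {A : Matrix m m 𝕜} (hA : A.PosSemidef) :
    Tendsto (fun ρ : ℝ => Real.logb ρ (RCLike.re (1 + (ρ : 𝕜) • A).det)) atTop
      (nhds (A.rank : ℝ)) := by
  have hnonneg : ∀ i, 0 ≤ hA.isHermitian.eigenvalues i := hA.eigenvalues_nonneg
  rw [rank_eq_sum_eigenvalues_ne_zero hA.isHermitian]
  refine (tendsto_finsetSum _ fun i _ => tendsto_logb_base_one_add_mul (hnonneg i)).congr' ?_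
  filter_upwards [eventually_ge_atTop 0] with ρ hρ
  have hfactor : ∀ i, 1 + ρ * hA.isHermitian.eigenvalues i ≠ 0 := fun i =>
    (add_pos_of_pos_of_nonneg one_pos (mul_nonneg hρ (hnonneg i))).ne'
  rw [re_det_one_add_ofReal_smul_eq_prod_eigenvalues hA.isHermitian,
    Real.logb_prod _ _ fun i _ => hfactor i]

theorem tendsto_logb_base_det_one_add_smul_mul_conjTranspose (H : Matrix m n 𝕜) :
    Tendsto (fun ρ : ℝ => Real.logb ρ (RCLike.re (1 + (ρ : 𝕜) • (H * Hᴴ)).det)) atTop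
      (nhds (H.rank : ℝ)) := by
  simpa only [rank_self_mul_conjTranspose] using
    tendsto_logb_base_det_one_add_smul (posSemidef_self_mul_conjTranspose H)

end Determinant

section Rank

variable {R m n : Type*} [CommRing R] [IsDomain R] [Fintype n]

theorem rank_eq_card_of_det_submatrix_ne_zero [DecidableEq n] {A : Matrix m n R} (r : n → m)
    (hdet : (A.submatrix r id).det ≠ 0) : A.rank = Fintype.card n :=
  le_antisymm A.rank_le_card_width <|
    (rank_of_det_ne_zero hdet).symm.trans_le (A.rank_submatrix_le r id)

theorem rank_eq_card_of_isLowerTriangular_submatrix [LinearOrder n] {A : Matrix m n R} (r : n → m)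
    (hlower : (A.submatrix r id).IsLowerTriangular) (hdiag : ∀ i, A (r i) i ≠ 0) :
    A.rank = Fintype.card n := by
  refine rank_eq_card_of_det_submatrix_ne_zero r ?_
  rw [det_of_isLowerTriangular _ hlower]
  exact Finset.prod_ne_zero_iff.mpr fun i _ => hdiag i

end Rank

/-- For the successive-relaying channel matrix `H` with `a ≠ 0`,
the per-time-slot rate `(1/(L+1)) log₂ det(I + ρ H Hᴴ)` divided by `log₂ ρ`
tends to `L/(L+1)` as `ρ → ∞`: the scheme achieves multiplexing gain
`L/(L+1)`. -/
theorem stmt14 (L : ℕ) (hL : 1 ≤ L) (a : ℂ) (ha : a ≠ 0) (b : Fin L → ℂ)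
    (H : Matrix (Fin (L + 1)) (Fin L) ℂ)
    (hH : ∀ i j, H i j =
      if (i : ℕ) = (j : ℕ) then a else if (i : ℕ) = (j : ℕ) + 1 then b j else 0) :
    Tendsto (fun ρ : ℝ =>
        ((1 / ((L : ℝ) + 1)) *
            Real.logb 2 ((1 + (ρ : ℂ) • (H * H.conjTranspose)).det).re) /
          Real.logb 2 ρ)
      atTop (nhds ((L : ℝ) / ((L : ℝ) + 1))) := by
  have hlower : (H.submatrix Fin.castSucc id).IsLowerTriangular := by
    intro i j hij
    have hlt : (i : ℕ) < j := hij
    simp [hH, hlt.ne, (Nat.lt_succ_of_lt hlt).ne]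
  have hdiag : ∀ i : Fin L, H i.castSucc i ≠ 0 := fun i => by simpa [hH] using ha
  have hrank : H.rank = L := by
    simpa using rank_eq_card_of_isLowerTriangular_submatrix Fin.castSucc hlower hdiag
  have hgain := tendsto_logb_base_det_one_add_smul_mul_conjTranspose H
  rw [hrank] at hgain
  simp only [mul_div_assoc, logb_div_logb_eq_logb one_lt_two]
  simpa only [one_div_mul_eq_div] using! hgain.const_mul (1 / ((L : ℝ) + 1))
end
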